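/- arXiv:1209.4972 — 2 statements merged into one kernel-verified Lean document; each statement's English description precedes it below -/
import Mathlib

section
/- Let G be a connected unicyclic graph of the form G = C_l ∪ (P_1 ∪ ⋯ ∪ P_r) with l ≥ 5, where C_l is a cycle of length l, each P_i is a path graph with |V(P_i) ∩ V(C_l)| = 1, and the P_i are pairwise vertex-disjoint. Then J_G is not unmixed. -/
open MvPolynomial

noncomputable section

/-- The binomial edge ideal of a simple graph `G` on vertex type `V`, inside the
polynomial ring `K[x_i, y_i : i ∈ V]`, modelled as `MvPolynomial (V ⊕ V) K`
with `x_i = X (Sum.inl i)` and `y_i = X (Sum.inr i)`. -/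
def binomialEdgeIdeal (K : Type*) [Field K] {V : Type*} (G : SimpleGraph V) :
    Ideal (MvPolynomial (V ⊕ V) K) :=
  Ideal.span { f | ∃ i j : V, G.Adj i j ∧
    f = X (Sum.inl i) * X (Sum.inr j) - X (Sum.inl j) * X (Sum.inr i) }

/-- The minimal number of generators of an ideal. -/
def mu {R : Type*} [CommRing R] (J : Ideal R) : ℕ :=
  sInf {k | ∃ s : Finset R, s.card = k ∧ Ideal.span (s : Set R) = J}

/-- The height of an ideal: the infimum of the heights of the primes containing it. -/
def htI {R : Type*} [CommRing R] (I : Ideal R) : ℕ∞ :=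
  ⨅ (P : PrimeSpectrum R) (_ : I ≤ P.asIdeal), Order.height P

/-- An ideal is unmixed if all of its minimal primes have height equal to its height. -/
def IsUnmixed {R : Type*} [CommRing R] (I : Ideal R) : Prop :=
  ∀ P ∈ I.minimalPrimes, htI P = htI I

/-- The depth of a ring `R` with respect to an ideal `m`: the supremum of the
lengths of regular sequences on `R` consisting of elements of `m`. -/
def ringDepth (R : Type*) [CommRing R] (m : Ideal R) : ℕ∞ :=
  sSup {d : ℕ∞ | ∃ l : List R, (l.length : ℕ∞) = d ∧ (∀ x ∈ l, x ∈ m) ∧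
    RingTheory.Sequence.IsRegular R l}

/-- The graded maximal ideal of the quotient of a polynomial ring by an ideal `J`:
the image of the ideal generated by all the variables. -/
def gradedMaxQuot {K σ : Type*} [Field K] (J : Ideal (MvPolynomial σ K)) :
    Ideal (MvPolynomial σ K ⧸ J) :=
  (Ideal.span (Set.range (X : σ → MvPolynomial σ K))).map (Ideal.Quotient.mk J)

/-- `S/J` is Cohen–Macaulay: its depth with respect to the graded maximal ideal
equals its Krull dimension. -/
def IsCMQuot {K σ : Type*} [Field K] (J : Ideal (MvPolynomial σ K)) : Prop :=
  (ringDepth (MvPolynomial σ K ⧸ J) (gradedMaxQuot J) : WithBot ℕ∞) =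
    ringKrullDim (MvPolynomial σ K ⧸ J)

/-- A graph is a path graph if its vertices can be ordered `v_1, …, v_m` so that
its edges are exactly `{v_i, v_{i+1}}` for `1 ≤ i ≤ m - 1`. -/
def IsPathGraph {V : Type*} (H : SimpleGraph V) : Prop :=
  ∃ (m : ℕ) (e : V ≃ Fin m), ∀ a b : V,
    H.Adj a b ↔ ((e a : ℕ) + 1 = (e b : ℕ) ∨ (e b : ℕ) + 1 = (e a : ℕ))

/-- The vertex set of a connected component, as a set of vertices. -/
def compSupp {V : Type*} (G : SimpleGraph V) (c : G.ConnectedComponent) : Set V :=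
  {v | G.connectedComponentMk v = c}

end

noncomputable section

/-- A graph is a cycle graph of length `l` if its vertices can be arranged in a
cyclic order `v_1, …, v_l` so that its edges are exactly the consecutive ones
(indices mod `l`). -/
def IsCycleGraphOfLength {V : Type*} (H : SimpleGraph V) (l : ℕ) : Prop :=
  ∃ e : V ≃ Fin l, ∀ a b : V,
    H.Adj a b ↔ (((e a : ℕ) + 1) % l = (e b : ℕ) ∨ ((e b : ℕ) + 1) % l = (e a : ℕ))

section ComponentPrimes

variable (K : Type*) [Field K] {V : Type*} [DecidableEq V]

/-- The parametrization `x_v ↦ a_v`, `y_v ↦ a_v t_{σ v}` of the vertices outside `S`, with both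
variables of every vertex of `S` sent to `0`. -/
def componentMap (S : Finset V) (σ : V → V) :
    MvPolynomial (V ⊕ V) K →ₐ[K] MvPolynomial (V ⊕ V) K :=
  aeval (Sum.elim (fun v => if v ∈ S then 0 else X (Sum.inl v))
    (fun v => if v ∈ S then 0 else X (Sum.inl v) * X (Sum.inr (σ v))))

/-- The prime generated by the variables of the vertices in `S` and by the binomials `f_{ij}`
with `i, j ∉ S` and `σ i = σ j`, defined as the kernel of its parametrization. -/
def componentPrime (S : Finset V) (σ : V → V) : Ideal (MvPolynomial (V ⊕ V) K) :=
  RingHom.ker (componentMap K S σ)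

instance componentPrime_isPrime (S : Finset V) (σ : V → V) : (componentPrime K S σ).IsPrime :=
  RingHom.ker_isPrime _

variable {K}

lemma mem_componentPrime {S : Finset V} {σ : V → V} {f : MvPolynomial (V ⊕ V) K} :
    f ∈ componentPrime K S σ ↔ componentMap K S σ f = 0 := Iff.rfl

@[simp]
lemma componentMap_inl (S : Finset V) (σ : V → V) (v : V) :
    componentMap K S σ (X (Sum.inl v)) = if v ∈ S then 0 else X (Sum.inl v) := by
  simp [componentMap]

@[simp]
lemma componentMap_inr (S : Finset V) (σ : V → V) (v : V) :
    componentMap K S σ (X (Sum.inr v)) =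
      if v ∈ S then 0 else X (Sum.inl v) * X (Sum.inr (σ v)) := by
  simp [componentMap]

lemma inl_notMem_componentPrime {S : Finset V} {σ : V → V} {v : V} (hv : v ∉ S) :
    X (Sum.inl v) ∉ componentPrime K S σ := by
  simp [mem_componentPrime, hv]

lemma binomial_mem_componentPrime {S : Finset V} {σ : V → V} {i j : V}
    (h : i ∉ S → j ∉ S → σ i = σ j) :
    (X (Sum.inl i) * X (Sum.inr j) - X (Sum.inl j) * X (Sum.inr i) : MvPolynomial (V ⊕ V) K) ∈
      componentPrime K S σ := by
  rw [mem_componentPrime]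
  by_cases hi : i ∈ S
  · simp [hi]
  by_cases hj : j ∈ S
  · simp [hj]
  simp only [map_sub, map_mul, componentMap_inl, componentMap_inr, hi, hj, if_false, h hi hj]
  ring

lemma binomial_notMem_componentPrime {S : Finset V} {σ : V → V} {i j : V}
    (hi : i ∉ S) (hj : j ∉ S) (h : σ i ≠ σ j) :
    (X (Sum.inl i) * X (Sum.inr j) - X (Sum.inl j) * X (Sum.inr i) : MvPolynomial (V ⊕ V) K) ∉
      componentPrime K S σ := by
  rw [mem_componentPrime]
  simp only [map_sub, map_mul, componentMap_inl, componentMap_inr, hi, hj, if_false]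
  have : (X (Sum.inl i) * (X (Sum.inl j) * X (Sum.inr (σ j))) -
      X (Sum.inl j) * (X (Sum.inl i) * X (Sum.inr (σ i))) : MvPolynomial (V ⊕ V) K) =
      X (Sum.inl i) * X (Sum.inl j) * (X (Sum.inr (σ j)) - X (Sum.inr (σ i))) := by ring
  rw [this]
  refine mul_ne_zero (mul_ne_zero (X_ne_zero _) (X_ne_zero _)) (sub_ne_zero.mpr fun e => h ?_)
  exact (Sum.inr_injective (X_injective e)).symm

/-- A prime below `componentPrime K S σ` that contains the variables of `S` and the binomials
joining each vertex to its representative is all of `componentPrime K S σ`. -/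
lemma componentPrime_le {S : Finset V} {σ : V → V} (hσ : ∀ v ∉ S, σ v ∉ S)
    {P : Ideal (MvPolynomial (V ⊕ V) K)} [P.IsPrime] (hP : P ≤ componentPrime K S σ)
    (hx : ∀ v ∈ S, X (Sum.inl v) ∈ P) (hy : ∀ v ∈ S, X (Sum.inr v) ∈ P)
    (hf : ∀ v ∉ S, X (Sum.inl v) * X (Sum.inr (σ v)) - X (Sum.inl (σ v)) * X (Sum.inr v) ∈ P) :
    componentPrime K S σ ≤ P := by
  let F := FractionRing (MvPolynomial (V ⊕ V) K ⧸ P)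
  let π : MvPolynomial (V ⊕ V) K →ₐ[K] F :=
    (IsScalarTower.toAlgHom K (MvPolynomial (V ⊕ V) K ⧸ P) F).comp (Ideal.Quotient.mkₐ K P)
  have hπ (f : MvPolynomial (V ⊕ V) K) : π f = 0 ↔ f ∈ P := by
    have : π f = algebraMap (MvPolynomial (V ⊕ V) K ⧸ P) F (Ideal.Quotient.mk P f) := rfl
    rw [this, FaithfulSMul.algebraMap_eq_zero_iff, Ideal.Quotient.eq_zero_iff_mem]
  let θ : MvPolynomial (V ⊕ V) K →ₐ[K] F := aeval (Sum.elim (fun v => π (X (Sum.inl v)))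
    (fun v => π (X (Sum.inr v)) / π (X (Sum.inl v))))
  have hθ : θ.comp (componentMap K S σ) = π := by
    apply MvPolynomial.algHom_ext
    rintro (v | v)
    · by_cases hv : v ∈ S
      · simp [hv, (hπ _).mpr (hx v hv)]
      · simp [hv, θ]
    · by_cases hv : v ∈ S
      · simp [hv, (hπ _).mpr (hy v hv)]
      · have h0 : π (X (Sum.inl (σ v))) ≠ 0 := fun h =>
          inl_notMem_componentPrime (hσ v hv) (hP ((hπ _).mp h))
        have h1 := (hπ _).mpr (hf v hv)
        simp only [map_sub, map_mul] at h1
        simp only [AlgHom.comp_apply, componentMap_inr, hv, if_false, map_mul, θ, aeval_X,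
          Sum.elim_inl, Sum.elim_inr]
        rw [mul_div_assoc', div_eq_iff h0]
        linear_combination h1
  intro f hfm
  rw [← hπ, ← hθ, AlgHom.comp_apply, mem_componentPrime.mp hfm, map_zero]

lemma componentPrime_le_of_comp {S T : Finset V} {σ τ : V → V}
    (θ : MvPolynomial (V ⊕ V) K →ₐ[K] MvPolynomial (V ⊕ V) K)
    (h : θ.comp (componentMap K S σ) = componentMap K T τ) :
    componentPrime K S σ ≤ componentPrime K T τ := by
  intro f hf
  rw [mem_componentPrime, ← h, AlgHom.comp_apply, mem_componentPrime.mp hf, map_zero]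

lemma componentPrime_lt_insert {S : Finset V} {σ : V → V} {s : V} (hs : s ∉ S) :
    componentPrime K S σ < componentPrime K (insert s S) σ := by
  refine lt_of_le_of_ne (componentPrime_le_of_comp
    (aeval (Sum.elim (fun v => if v = s then 0 else X (Sum.inl v)) (fun v => X (Sum.inr v)))) ?_)
    fun h => inl_notMem_componentPrime (K := K) (σ := σ) hs ?_
  · apply MvPolynomial.algHom_ext
    rintro (v | v) <;> by_cases hv : v ∈ S <;> by_cases hvs : v = s <;> simp [hv, hvs, hs]
  · rw [h]
    simp [mem_componentPrime]

lemma componentPrime_update_lt {σ : V → V} {i j w : V} (hij : i ≠ j) (hσ : σ i = σ j)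
    (hw : ∀ v, σ v ≠ w) :
    componentPrime K ∅ (Function.update σ i w) < componentPrime K ∅ σ := by
  refine lt_of_le_of_ne (componentPrime_le_of_comp
    (aeval (Sum.elim (fun v => X (Sum.inl v))
      (fun v => X (Sum.inr (if v = w then σ i else v))))) ?_)
    fun h => binomial_notMem_componentPrime (K := K) (σ := Function.update σ i w)
      (Finset.notMem_empty i) (Finset.notMem_empty j) ?_ ?_
  · apply MvPolynomial.algHom_ext
    rintro (v | v)
    · simp
    · by_cases hv : v = i
      · subst hv; simp
      · simp [hv, hw]
  · simpa [Function.update_of_ne hij.symm] using (hw j).symm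
  · rw [h]
    exact binomial_mem_componentPrime fun _ _ => hσ

lemma componentMap_congr {S : Finset V} {σ τ : V → V} (h : ∀ v ∉ S, σ v = τ v) :
    componentMap K S σ = componentMap K S τ := by
  apply MvPolynomial.algHom_ext
  rintro (v | v)
  · simp
  · by_cases hv : v ∈ S
    · simp [hv]
    · simp [hv, h v hv]

/-- If `σ` picks a representative of each connected component of `H = G - S` and every vertex of
`S` is adjacent to two different components, then `componentPrime K S σ` is a minimal prime of
the binomial edge ideal. -/
lemma componentPrime_mem_minimalPrimes {G H : SimpleGraph V} {S : Finset V} {σ : V → V}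
    (hH : ∀ i j, H.Adj i j ↔ G.Adj i j ∧ i ∉ S ∧ j ∉ S)
    (hreach : ∀ v, H.Reachable v (σ v)) (hadj : ∀ i j, H.Adj i j → σ i = σ j)
    (hσ : ∀ v ∉ S, σ v ∉ S)
    (hcut : ∀ s ∈ S, ∃ i j, G.Adj s i ∧ G.Adj s j ∧ i ∉ S ∧ j ∉ S ∧ σ i ≠ σ j) :
    componentPrime K S σ ∈ (binomialEdgeIdeal K G).minimalPrimes := by
  refine ⟨⟨inferInstance, ?_⟩, ?_⟩
  · unfold binomialEdgeIdeal
    rw [Ideal.span_le]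
    rintro _ ⟨i, j, hij, rfl⟩
    exact binomial_mem_componentPrime fun hi hj => hadj i j ((hH i j).mpr ⟨hij, hi, hj⟩)
  · rintro P ⟨hPprime, hGP⟩ hP
    have hedge {i j : V} (h : G.Adj i j) :
        (X (Sum.inl i) * X (Sum.inr j) - X (Sum.inl j) * X (Sum.inr i) :
          MvPolynomial (V ⊕ V) K) ∈ P := hGP (Ideal.subset_span ⟨i, j, h, rfl⟩)
    have hwalk {i j : V} (h : H.Reachable i j) :
        (X (Sum.inl i) * X (Sum.inr j) - X (Sum.inl j) * X (Sum.inr i) :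
          MvPolynomial (V ⊕ V) K) ∈ P := by
      obtain ⟨p⟩ := h
      induction p with
      | nil => simp
      | @cons i j k hij p ih =>
        obtain ⟨hG, hi, hj⟩ := (hH i j).mp hij
        refine (hPprime.mem_or_mem (x := X (Sum.inl j)) ?_).resolve_left
          fun h => inl_notMem_componentPrime hj (hP h)
        convert! P.add_mem (P.mul_mem_left (X (Sum.inl i)) ih)
          (P.mul_mem_left (X (Sum.inl k)) (hedge hG)) using 1
        ring
    have hker {s : V} (hs : s ∈ S) :
        (X (Sum.inl s) : MvPolynomial (V ⊕ V) K) ∈ P ∧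
          (X (Sum.inr s) : MvPolynomial (V ⊕ V) K) ∈ P := by
      obtain ⟨i, j, hi, hj, hiS, hjS, hij⟩ := hcut s hs
      have hnot := fun h => binomial_notMem_componentPrime (K := K) hiS hjS hij (hP h)
      constructor
      · refine (hPprime.mem_or_mem ?_).resolve_right hnot
        convert! P.sub_mem (P.mul_mem_left (X (Sum.inl i)) (hedge hj))
          (P.mul_mem_left (X (Sum.inl j)) (hedge hi)) using 1
        ring
      · refine (hPprime.mem_or_mem ?_).resolve_right hnot
        convert! P.sub_mem (P.mul_mem_left (X (Sum.inr i)) (hedge hj))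
          (P.mul_mem_left (X (Sum.inr j)) (hedge hi)) using 1
        ring
    exact componentPrime_le hσ hP (fun v hv => (hker hv).1) (fun v hv => (hker hv).2)
      fun v _ => hwalk (hreach v)

variable [Fintype V]

lemma card_le_height_componentPrime_empty (σ : V → V) :
    (Fintype.card V : ℕ∞) ≤
      (componentPrime K ∅ σ).height + (Finset.univ.image σ).card := by
  induction hk : Fintype.card V - (Finset.univ.image σ).card generalizing σ with
  | zero =>
    have : Fintype.card V ≤ (Finset.univ.image σ).card := by omega
    exact le_add_left (by exact_mod_cast this)
  | succ k ih =>
    have hinj : ¬ Function.Injective σ := fun h => by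
      rw [Finset.card_image_of_injective _ h, Finset.card_univ] at hk
      omega
    have hsurj : ¬ Function.Surjective σ := fun h => hinj (Finite.injective_iff_surjective.mpr h)
    obtain ⟨i, j, hσ, hij⟩ : ∃ i j, σ i = σ j ∧ i ≠ j := by
      simpa [Function.Injective] using hinj
    obtain ⟨w, hw⟩ : ∃ w, ∀ v, σ v ≠ w := by simpa [Function.Surjective] using hsurj
    have himg : Finset.univ.image (Function.update σ i w) = insert w (Finset.univ.image σ) := by
      ext z
      simp only [Finset.mem_image, Finset.mem_univ, true_and, Finset.mem_insert]
      constructor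
      · rintro ⟨v, rfl⟩
        by_cases hv : v = i
        · subst hv; simp
        · simp [hv]
      · rintro (rfl | ⟨v, rfl⟩)
        · exact ⟨i, by simp⟩
        · by_cases hv : v = i
          · exact ⟨j, by subst hv; simp [hij.symm, hσ]⟩
          · exact ⟨v, by simp [hv]⟩
    have hcard : (Finset.univ.image (Function.update σ i w)).card =
        (Finset.univ.image σ).card + 1 := by
      rw [himg, Finset.card_insert_of_notMem (by simpa using hw)]
    have := ih (Function.update σ i w) (by omega)
    rw [hcard] at this
    calc (Fintype.card V : ℕ∞)
        ≤ (componentPrime K ∅ (Function.update σ i w)).height +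
          ((Finset.univ.image σ).card + 1 : ℕ) := this
      _ = (componentPrime K ∅ (Function.update σ i w)).height + 1 +
          (Finset.univ.image σ).card := by push_cast; ring
      _ ≤ _ := by
        gcongr
        exact Ideal.height_add_one_le_of_lt_of_isPrime (componentPrime_update_lt hij hσ hw)

lemma card_add_card_le_height_componentPrime_add (S : Finset V) (σ : V → V) :
    ((Fintype.card V + S.card : ℕ) : ℕ∞) ≤
      (componentPrime K S σ).height + (Finset.univ.image σ).card := by
  induction S using Finset.induction_on with
  | empty => simpa using card_le_height_componentPrime_empty σ
  | insert s S hs ih =>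
    rw [Finset.card_insert_of_notMem hs]
    calc ((Fintype.card V + (S.card + 1) : ℕ) : ℕ∞)
        = ((Fintype.card V + S.card : ℕ) : ℕ∞) + 1 := by push_cast; ring
      _ ≤ (componentPrime K S σ).height + (Finset.univ.image σ).card + 1 := by gcongr
      _ = (componentPrime K S σ).height + 1 + (Finset.univ.image σ).card := by ring
      _ ≤ _ := by
        gcongr
        exact Ideal.height_add_one_le_of_lt_of_isPrime (componentPrime_lt_insert hs)

lemma height_componentPrime_le (S : Finset V) {σ : V → V} (hσ : ∀ v ∉ S, σ v ∉ S)
    (hidem : ∀ v, σ (σ v) = σ v) :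
    (componentPrime K S σ).height ≤
      ((S.card + S.card + {v | v ∉ S ∧ σ v ≠ v}.ncard : ℕ) : ℕ∞) := by
  let A : Set (MvPolynomial (V ⊕ V) K) :=
    ((fun v => X (Sum.inl v)) '' S ∪ (fun v => X (Sum.inr v)) '' S) ∪
    (fun v => X (Sum.inl v) * X (Sum.inr (σ v)) - X (Sum.inl (σ v)) * X (Sum.inr v)) ''
      {v | v ∉ S ∧ σ v ≠ v}
  have hA : A.Finite := Set.toFinite _
  have hcard : A.ncard ≤ S.card + S.card + {v | v ∉ S ∧ σ v ≠ v}.ncard := by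
    refine (Set.ncard_union_le _ _).trans (add_le_add ((Set.ncard_union_le _ _).trans
      (add_le_add ?_ ?_)) (Set.ncard_image_le (Set.toFinite _)))
    all_goals exact (Set.ncard_image_le (Set.toFinite _)).trans (by simp)
  refine (Ideal.height_le_card_of_mem_minimalPrimes_span hA ⟨⟨inferInstance, ?_⟩, ?_⟩).trans
    (by exact_mod_cast hcard)
  · rw [Ideal.span_le]
    rintro _ ((⟨v, hv, rfl⟩ | ⟨v, hv, rfl⟩) | ⟨v, hv, rfl⟩)
    · simpa [mem_componentPrime] using hv
    · have : v ∈ S := hv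
      simp [mem_componentPrime, this]
    · exact binomial_mem_componentPrime fun _ _ => (hidem v).symm
  · rintro P ⟨hPprime, hAP⟩ hP
    rw [Ideal.span_le] at hAP
    refine componentPrime_le hσ hP (fun v hv => hAP (.inl (.inl ⟨v, hv, rfl⟩)))
      (fun v hv => hAP (.inl (.inr ⟨v, hv, rfl⟩))) fun v hv => ?_
    by_cases h : σ v = v
    · rw [h, sub_self]
      exact P.zero_mem
    · exact hAP (.inr ⟨v, ⟨hv, h⟩, rfl⟩)

/-- The height of `componentPrime K S σ`, where the vertices `v ∉ S` with `σ v = v` represent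
the classes of `σ` outside `S`. -/
lemma height_componentPrime_add (S : Finset V) {σ : V → V} (hσ : ∀ v ∉ S, σ v ∉ S)
    (hidem : ∀ v, σ (σ v) = σ v) (hS : ∃ v, v ∉ S) :
    (componentPrime K S σ).height + (({v | v ∉ S ∧ σ v = v} : Finset V).card : ℕ∞) =
      ((Fintype.card V + S.card : ℕ) : ℕ∞) := by
  apply le_antisymm
  · refine (add_le_add_left (height_componentPrime_le (K := K) S hσ hidem) _).trans ?_
    norm_cast
    have h1 : {v | v ∉ S ∧ σ v ≠ v}.ncard = ({v | v ∉ S ∧ σ v ≠ v} : Finset V).card := by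
      rw [← Set.ncard_coe_finset]
      simp
    have h2 := Finset.card_filter_add_card_filter_not (s := Sᶜ) (fun v => σ v = v)
    have h3 : ({v | v ∉ S ∧ σ v = v} : Finset V) = Sᶜ.filter (fun v => σ v = v) := by
      ext; simp
    have h4 : ({v | v ∉ S ∧ σ v ≠ v} : Finset V) = Sᶜ.filter (fun v => ¬ σ v = v) := by
      ext; simp
    have h5 := S.card_add_card_compl
    rw [h1, h3, h4]
    omega
  · obtain ⟨w, hw⟩ := hS
    let τ : V → V := fun v => if v ∈ S then σ w else σ v
    have hτ : componentPrime K S σ = componentPrime K S τ := by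
      unfold componentPrime
      rw [componentMap_congr (K := K) (τ := τ) fun v hv => by simp [τ, hv]]
    rw [hτ]
    refine (card_add_card_le_height_componentPrime_add (K := K) S τ).trans ?_
    gcongr
    intro z hz
    obtain ⟨v, -, rfl⟩ := Finset.mem_image.mp hz
    by_cases hv : v ∈ S
    · simp [τ, hv, hidem, hσ w hw]
    · simp [τ, hv, hidem, hσ v hv]

end ComponentPrimes

lemma htI_eq_height {R : Type*} [CommRing R] (P : Ideal R) [hP : P.IsPrime] :
    htI P = P.height := by
  have h : P.height = Order.height (⟨P, hP⟩ : PrimeSpectrum R) :=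
    PrimeSpectrum.height_eq_orderHeight ⟨P, hP⟩
  rw [h]
  exact le_antisymm (iInf₂_le (⟨P, hP⟩ : PrimeSpectrum R) le_rfl)
    (le_iInf₂ fun Q hQ => Order.height_mono hQ)

section Forest

variable {V : Type*} [Fintype V] [DecidableEq V]

/-- A finite forest has a system of representatives of its connected components whose size is
the number of vertices minus the number of edges. -/
lemma SimpleGraph.IsAcyclic.exists_representatives {H : SimpleGraph V} (hH : H.IsAcyclic) :
    ∃ σ : V → V, (∀ v, H.Reachable v (σ v)) ∧ (∀ i j, H.Adj i j → σ i = σ j) ∧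
      (∀ v, σ (σ v) = σ v) ∧
      ({v | σ v = v} : Finset V).card + H.edgeSet.ncard = Fintype.card V := by
  induction hk : H.edgeSet.ncard generalizing H with
  | zero =>
    have hbot : H = ⊥ := by
      rwa [Set.ncard_eq_zero, SimpleGraph.edgeSet_eq_empty] at hk
    subst hbot
    exact ⟨id, fun v => .rfl, by simp, by simp, by simp⟩
  | succ k ih =>
    obtain ⟨e, he⟩ : H.edgeSet.Nonempty := by
      rw [← Set.ncard_pos]
      omega
    induction e with | _ a b
    have hle : H.deleteEdges {s(a, b)} ≤ H := H.deleteEdges_le _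
    have hcard : (H.deleteEdges {s(a, b)}).edgeSet.ncard = k := by
      rw [SimpleGraph.edgeSet_deleteEdges, Set.ncard_sdiff_singleton_of_mem he, hk]
      rfl
    obtain ⟨σ, hreach, hadj, hidem, hfix⟩ := ih (hH.anti hle) hcard
    have hnot : ¬ (H.deleteEdges {s(a, b)}).Reachable a b :=
      SimpleGraph.isBridge_iff.mp (SimpleGraph.isAcyclic_iff_forall_adj_isBridge.mp hH he)
    have hab : σ a ≠ σ b := fun h =>
      hnot ((hreach a).trans (h ▸ (hreach b).symm))
    refine ⟨fun v => if σ v = σ a then σ b else σ v, fun v => ?_, fun i j hij => ?_,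
      fun v => ?_, ?_⟩
    · by_cases hv : σ v = σ a
      · simp only [hv, if_true]
        have h1 := (hreach v).mono hle
        rw [hv] at h1
        exact h1.trans (((hreach a).mono hle).symm.trans
          ((SimpleGraph.Adj.reachable he).trans ((hreach b).mono hle)))
      · simpa [hv] using (hreach v).mono hle
    · by_cases h : s(i, j) = s(a, b)
      · rcases Sym2.eq_iff.mp h with ⟨rfl, rfl⟩ | ⟨rfl, rfl⟩ <;> simp
      · simp only [hadj i j (by simpa [hij] using h)]
    · by_cases hv : σ v = σ a
      · simp [hv, hidem]
      · simp [hv, hidem]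
    · have : ({v | (if σ v = σ a then σ b else σ v) = v} : Finset V) =
          ({v | σ v = v} : Finset V).erase (σ a) := by
        ext v
        simp only [Finset.mem_filter, Finset.mem_univ, true_and, Finset.mem_erase]
        by_cases hv : σ v = σ a
        · simp only [hv, if_true]
          constructor
          · rintro rfl
            exact absurd (hv.symm.trans (hidem b)) hab
          · rintro ⟨h1, h2⟩
            exact absurd h2.symm h1
        · simp only [hv, if_false]
          exact ⟨fun h => ⟨fun h' => hv (by rw [h', hidem]), h⟩, And.right⟩
      rw [this, Finset.card_erase_of_mem (by simp [hidem])]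
      have hpos : 0 < ({v | σ v = v} : Finset V).card :=
        Finset.card_pos.mpr ⟨σ a, by simp [hidem]⟩
      omega

end Forest

section Unicyclic

lemma ncard_edgeSet_deleteIncidenceSet_add_degree {V : Type*} [Fintype V] (G : SimpleGraph V)
    (x : V) [Fintype (G.neighborSet x)] :
    (G.deleteIncidenceSet x).edgeSet.ncard + G.degree x = G.edgeSet.ncard := by
  classical
  rw [SimpleGraph.edgeSet_deleteIncidenceSet, ← SimpleGraph.card_incidenceSet_eq_degree,
    ← Nat.card_eq_fintype_card, Nat.card_coe_set_eq,
    Set.ncard_sdiff_add_ncard_of_subset (G.incidenceSet_subset x)]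

variable {V : Type*}

/-- Neighbours of `u` on either side of a cycle through `u` and `v` lie in different components
once `u` and `v` are removed. -/
lemma not_reachable_of_isAcyclic_deleteEdges {G H : SimpleGraph V} {u v u₁ u₂ v₁ : V}
    (huv : u ≠ v) (hnadj : ¬ G.Adj u v) (hu₁ : G.Adj u u₁) (hu₂ : G.Adj u u₂) (hne : u₁ ≠ u₂)
    (hv : (G.deleteEdges {s(v, v₁)}).IsAcyclic)
    (hH : ∀ i j, H.Adj i j → G.Adj i j ∧ i ≠ u ∧ j ≠ u ∧ i ≠ v ∧ j ≠ v) :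
    ¬ H.Reachable u₁ u₂ := by
  intro h
  have hv₁ : u₁ ≠ v := by rintro rfl; exact hnadj hu₁
  have hv₂ : u₂ ≠ v := by rintro rfl; exact hnadj hu₂
  have hadj : (G.deleteEdges {s(v, v₁)}).Adj u u₁ := by
    simp only [SimpleGraph.deleteEdges_adj, hu₁, true_and, Set.mem_singleton_iff, Sym2.eq_iff]
    grind
  have hbr := SimpleGraph.isBridge_iff.mp
    (SimpleGraph.isAcyclic_iff_forall_adj_isBridge.mp hv hadj)
  refine hbr (SimpleGraph.Reachable.trans (v := u₂) (SimpleGraph.Adj.reachable ?_) (h.symm.mono ?_))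
  · simp only [SimpleGraph.deleteEdges_adj, hu₂, true_and, Set.mem_singleton_iff, Sym2.eq_iff]
    grind
  · intro i j hij
    have := hH i j hij
    simp only [SimpleGraph.deleteEdges_adj, this.1, true_and, Set.mem_singleton_iff, Sym2.eq_iff]
    grind

/-- In a connected unicyclic graph with unmixed binomial edge ideal, the degrees of two
nonadjacent vertices of the cycle sum to `5`. -/
lemma degree_add_degree_eq_five_of_isUnmixed [Fintype V] [DecidableEq V] (K : Type*) [Field K]
    (G : SimpleGraph V) [DecidableRel G.Adj] (hconn : G.Connected)
    (huni : G.edgeSet.ncard = Fintype.card V) (hG : IsUnmixed (binomialEdgeIdeal K G))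
    {u v u₁ u₂ v₁ v₂ : V} (huv : u ≠ v) (hnadj : ¬ G.Adj u v)
    (hu₁ : G.Adj u u₁) (hu₂ : G.Adj u u₂) (hu : u₁ ≠ u₂)
    (hv₁ : G.Adj v v₁) (hv₂ : G.Adj v v₂) (hv : v₁ ≠ v₂)
    (hacu : (G.deleteEdges {s(u, u₁)}).IsAcyclic) (hacv : (G.deleteEdges {s(v, v₁)}).IsAcyclic) :
    G.degree u + G.degree v = 5 := by
  classical
  have hmin₀ : componentPrime K ∅ (fun _ => u) ∈ (binomialEdgeIdeal K G).minimalPrimes :=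
    componentPrime_mem_minimalPrimes (H := G) (by simp) (fun w => hconn w u) (by simp) (by simp)
      (by simp)
  have hht₀ := height_componentPrime_add (K := K) ∅ (σ := fun _ => u) (by simp) (by simp)
    ⟨u, by simp⟩
  let H := (G.deleteIncidenceSet u).deleteIncidenceSet v
  have hH (i j : V) : H.Adj i j ↔ G.Adj i j ∧ i ∉ ({u, v} : Finset V) ∧ j ∉ ({u, v} : Finset V) := by
    simp only [H, SimpleGraph.deleteIncidenceSet_adj, Finset.mem_insert, Finset.mem_singleton]
    tauto
  have hHacyc : H.IsAcyclic := by
    refine hacu.anti fun i j hij => ?_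
    have := (hH i j).mp hij
    simp only [SimpleGraph.deleteEdges_adj, this.1, true_and, Set.mem_singleton_iff, Sym2.eq_iff]
    grind
  obtain ⟨σ, hreach, hadj, hidem, hfix⟩ := hHacyc.exists_representatives
  have hiso (i j : V) (hi : i ∈ ({u, v} : Finset V)) (h : H.Reachable i j) : i = j := by
    obtain ⟨p⟩ := h
    cases p with
    | nil => rfl
    | cons h _ => exact absurd hi ((hH _ _).mp h).2.1
  have hσ : ∀ w ∉ ({u, v} : Finset V), σ w ∉ ({u, v} : Finset V) := fun w hw h =>
    hw (hiso _ _ h (hreach w).symm ▸ h)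
  have hsep {i j : V} (h : ¬ H.Reachable i j) : σ i ≠ σ j := fun e =>
    h ((hreach i).trans (e ▸ (hreach j).symm))
  have hmin : componentPrime K {u, v} σ ∈ (binomialEdgeIdeal K G).minimalPrimes := by
    refine componentPrime_mem_minimalPrimes hH hreach hadj hσ fun s hs => ?_
    have hnadj' : ¬ G.Adj v u := fun h => hnadj h.symm
    have hnb {w : V} (h : G.Adj u w ∨ G.Adj v w) : w ∉ ({u, v} : Finset V) := by
      simp only [Finset.mem_insert, Finset.mem_singleton]
      rintro (rfl | rfl) <;> simp_all
    rcases Finset.mem_insert.mp hs with rfl | hs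
    · refine ⟨u₁, u₂, hu₁, hu₂, hnb (.inl hu₁), hnb (.inl hu₂), hsep
        (not_reachable_of_isAcyclic_deleteEdges huv hnadj hu₁ hu₂ hu hacv fun i j hij => ?_)⟩
      have := (hH i j).mp hij
      grind
    · rw [Finset.mem_singleton] at hs
      subst hs
      refine ⟨v₁, v₂, hv₁, hv₂, hnb (.inr hv₁), hnb (.inr hv₂), hsep
        (not_reachable_of_isAcyclic_deleteEdges huv.symm hnadj' hv₁ hv₂ hv hacu
          fun i j hij => ?_)⟩
      have := (hH i j).mp hij
      grind
  have hht := height_componentPrime_add (K := K) {u, v} hσ hidem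
    ⟨u₁, by
      simp only [Finset.mem_insert, Finset.mem_singleton]
      rintro (rfl | rfl) <;> simp_all⟩
  have heq : (componentPrime K {u, v} σ).height = (componentPrime K ∅ (fun _ => u)).height := by
    rw [← htI_eq_height, ← htI_eq_height, hG _ hmin, hG _ hmin₀]
  have hedges : H.edgeSet.ncard + G.degree u + G.degree v = Fintype.card V := by
    have h1 := ncard_edgeSet_deleteIncidenceSet_add_degree (G.deleteIncidenceSet u) v
    have h2 := ncard_edgeSet_deleteIncidenceSet_add_degree G u
    have h3 : (G.deleteIncidenceSet u).degree v = G.degree v := by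
      simp only [← SimpleGraph.card_neighborFinset_eq_degree]
      congr 1
      ext w
      simp only [SimpleGraph.mem_neighborFinset, SimpleGraph.deleteIncidenceSet_adj]
      refine ⟨And.left, fun h => ⟨h, huv.symm, ?_⟩⟩
      rintro rfl
      exact hnadj h.symm
    change H.edgeSet.ncard + _ = _ at h1
    rw [h3] at h1
    omega
  have hfix' : ({w | w ∉ ({u, v} : Finset V) ∧ σ w = w} : Finset V).card + 2 =
      ({w | σ w = w} : Finset V).card := by
    have hsub : ({u, v} : Finset V) ⊆ ({w | σ w = w} : Finset V) := fun w hw => by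
      simpa using (hiso w _ hw (hreach w)).symm
    rw [← Finset.card_pair huv, ← Finset.card_sdiff_add_card_eq_card hsub]
    congr 2
    ext w
    simp [and_comm]
  rw [Finset.card_pair huv, heq] at hht
  have hone : ({w | w ∉ (∅ : Finset V) ∧ u = w} : Finset V).card = 1 := by
    rw [Finset.card_eq_one]
    exact ⟨u, by ext; simp [eq_comm]⟩
  rw [hone] at hht₀
  generalize (componentPrime K ∅ (fun _ => u)).height = x at hht hht₀
  cases x with
  | top =>
    rw [top_add] at hht
    exact absurd hht.symm (ENat.natCast_ne_top _)
  | coe x =>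
    norm_cast at hht hht₀
    simp only [Finset.card_empty] at hht₀
    omega

/-- In a connected graph with as many edges as vertices, deleting an edge that is not a bridge
leaves a tree. -/
lemma isAcyclic_deleteEdges_of_not_isBridge [Fintype V] {G : SimpleGraph V} (hconn : G.Connected)
    (huni : G.edgeSet.ncard = Fintype.card V) {u v : V} (hadj : G.Adj u v)
    (h : ¬ G.IsBridge s(u, v)) : (G.deleteEdges {s(u, v)}).IsAcyclic := by
  have hmem : s(u, v) ∈ G.edgeSet := hadj
  refine (SimpleGraph.isTree_iff_connected_and_card.mpr
    ⟨hconn.connected_delete_edge_of_not_isBridge h, ?_⟩).isAcyclic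
  rw [Nat.card_coe_set_eq, SimpleGraph.edgeSet_deleteEdges,
    Set.ncard_sdiff_singleton_add_one hmem, huni, Nat.card_eq_fintype_card]

/-- An edge of a closed sequence of `l ≥ 3` consecutively adjacent vertices, distinct modulo `l`,
is not a bridge. -/
lemma not_isBridge_of_periodic {G : SimpleGraph V} {l : ℕ} (hl : 3 ≤ l) {w : ℕ → V}
    (hadj : ∀ k, G.Adj (w k) (w (k + 1))) (hper : ∀ k, w (k + l) = w k)
    (hinj : ∀ a b, w a = w b → a ≡ b [MOD l]) (k : ℕ) : ¬ G.IsBridge s(w k, w (k + 1)) := by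
  rw [SimpleGraph.isBridge_iff, not_not]
  have hreach (j : ℕ) (hj : j + 1 ≤ l) :
      (G.deleteEdges {s(w k, w (k + 1))}).Reachable (w (k + 1)) (w (k + 1 + j)) := by
    induction j with
    | zero => exact .rfl
    | succ j ih =>
      refine (ih (by omega)).trans (SimpleGraph.Adj.reachable ?_)
      simp only [SimpleGraph.deleteEdges_adj, Set.mem_singleton_iff, Sym2.eq_iff]
      refine ⟨hadj (k + 1 + j), ?_⟩
      rintro (⟨h, -⟩ | ⟨h, h'⟩)
      · have h1 := (Nat.modEq_iff_dvd' (by omega)).mp (hinj _ _ h).symm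
        have h2 := Nat.le_of_dvd (by omega) h1
        omega
      · have h1 := (Nat.modEq_iff_dvd' (by omega)).mp (hinj _ _ h').symm
        have h2 := Nat.le_of_dvd (by omega) h1
        have h3 := (Nat.modEq_iff_dvd' (by omega)).mp (hinj _ _ h).symm
        have h4 := Nat.le_of_dvd (by omega) h3
        omega
  have h := hreach (l - 1) (by omega)
  rw [show k + 1 + (l - 1) = k + l by omega, hper] at h
  exact h.symm

end Unicyclic

/-- Let `G` be a connected unicyclic graph of the form
`G = C_l ∪ (P_1 ∪ ⋯ ∪ P_r)` with `l ≥ 5`, where `C_l` is a cycle of length `l`,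
each `P_i` is a path graph meeting `C_l` in exactly one vertex, and the `P_i` are
pairwise vertex-disjoint. Then `J_G` is not unmixed. -/
theorem binomialEdgeIdeal_not_unmixed_of_long_cycle
    (K : Type*) [Field K] (n : ℕ) (G : SimpleGraph (Fin n))
    (hConn : G.Connected) (hUni : G.edgeSet.ncard = n)
    (l r : ℕ) (hl : 5 ≤ l) (hr : r ≤ l) (C : G.Subgraph) (P : Fin r → G.Subgraph)
    (hC : IsCycleGraphOfLength C.coe l)
    (hP : ∀ i, IsPathGraph (P i).coe)
    (hPC : ∀ i, ((P i).verts ∩ C.verts).ncard = 1)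
    (hPP : ∀ i j, i ≠ j → (P i).verts ∩ (P j).verts = ∅)
    (hcover : C ⊔ (⨆ i, P i) = ⊤) :
    ¬ IsUnmixed (binomialEdgeIdeal K G) := by
  classical
  intro hG
  obtain ⟨e, he⟩ := hC
  have hl0 : 0 < l := by omega
  let w : ℕ → Fin n := fun k => (e.symm ⟨k % l, Nat.mod_lt k hl0⟩ : C.verts)
  have hwC (k : ℕ) : w k ∈ C.verts := (e.symm ⟨k % l, Nat.mod_lt k hl0⟩).2
  have hCadj (a b : ℕ) : C.Adj (w a) (w b) ↔ a + 1 ≡ b [MOD l] ∨ b + 1 ≡ a [MOD l] := by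
    have := he (e.symm ⟨a % l, Nat.mod_lt a hl0⟩) (e.symm ⟨b % l, Nat.mod_lt b hl0⟩)
    simpa [Nat.ModEq, w] using this
  have hinj (a b : ℕ) (h : w a = w b) : a ≡ b [MOD l] := by
    simpa [Nat.ModEq] using e.symm.injective (Subtype.ext h)
  have hper (k : ℕ) : w (k + l) = w k := by simp [w]
  have hadj (k : ℕ) : G.Adj (w k) (w (k + 1)) := C.adj_sub ((hCadj _ _).mpr (.inl rfl))
  have hchord {a b : ℕ} (h : G.Adj (w a) (w b)) : C.Adj (w a) (w b) := by
    have htop : (C ⊔ ⨆ i, P i).Adj (w a) (w b) := by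
      rw [hcover]
      exact h
    rw [SimpleGraph.Subgraph.sup_adj, SimpleGraph.Subgraph.iSup_adj] at htop
    refine htop.resolve_right ?_
    rintro ⟨i, hi⟩
    obtain ⟨z, hz⟩ := Set.ncard_eq_one.mp (hPC i)
    have ha : w a ∈ (P i).verts ∩ C.verts := ⟨hi.fst_mem, hwC a⟩
    have hb : w b ∈ (P i).verts ∩ C.verts := ⟨hi.snd_mem, hwC b⟩
    rw [hz] at ha hb
    exact h.ne (ha.trans hb.symm)
  have huni : G.edgeSet.ncard = Fintype.card (Fin n) := by rw [hUni, Fintype.card_fin]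
  have hacyc (k : ℕ) := isAcyclic_deleteEdges_of_not_isBridge hConn huni (hadj k)
    (not_isBridge_of_periodic (by omega) hadj hper hinj k)
  have hprev (k : ℕ) : G.Adj (w k) (w (k + (l - 1))) := by
    have := hadj (k + (l - 1))
    rw [show k + (l - 1) + 1 = k + l by omega, hper] at this
    exact this.symm
  have hnot {a b : ℕ} (hab : a < b) (hb : b < a + l) : ¬ a ≡ b [MOD l] := fun h => by
    have := Nat.le_of_dvd (by omega) ((Nat.modEq_iff_dvd' hab.le).mp h)
    omega
  have hne (k : ℕ) : w (k + 1) ≠ w (k + (l - 1)) := fun h =>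
    hnot (by omega) (by omega) (hinj _ _ h)
  have hdeg {a b : ℕ} (hab : a + 2 ≤ b) (hb : b + 2 ≤ a + l) :
      G.degree (w a) + G.degree (w b) = 5 := by
    refine degree_add_degree_eq_five_of_isUnmixed K G hConn huni hG
      (fun h => hnot (by omega) (by omega) (hinj _ _ h)) (fun h => ?_)
      (hadj a) (hprev a) (hne a) (hadj b) (hprev b) (hne b) (hacyc a) (hacyc b)
    rcases (hCadj a b).mp (hchord h) with h | h
    · exact hnot (by omega) (by omega) h
    · exact hnot (by omega) (by omega) h.symm
  have h02 := hdeg (a := 0) (b := 2) (by omega) (by omega)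
  have h24 := hdeg (a := 2) (b := 4) (by omega) (by omega)
  have h14 := hdeg (a := 1) (b := 4) (by omega) (by omega)
  have h13 := hdeg (a := 1) (b := 3) (by omega) (by omega)
  have h03 := hdeg (a := 0) (b := 3) (by omega) (by omega)
  omega

end
end

section
/- The binomial edge ideal decomposes as J_G = ⋂_{T ⊆ [n]} P_T(G). -/
open MvPolynomial

noncomputable section

/-- The prime `P_T(G)` associated with a subset `T` of the vertices: it is generated
by the variables `x_i, y_i` for `i ∈ T` together with the binomial edge ideals of the
complete graphs on the connected components of the subgraph of `G` induced on the
complement of `T` (i.e. all `2`-minors `x_i y_j - x_j y_i` for distinct vertices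
`i, j ∉ T` lying in the same connected component of that induced subgraph). -/
def PTIdeal (K : Type*) [Field K] {n : ℕ} (G : SimpleGraph (Fin n)) (T : Set (Fin n)) :
    Ideal (MvPolynomial (Fin n ⊕ Fin n) K) :=
  Ideal.span
    ({ f | ∃ i ∈ T, f = X (Sum.inl i) } ∪ { f | ∃ i ∈ T, f = X (Sum.inr i) } ∪
      { f | ∃ (i j : Fin n) (hi : i ∈ Tᶜ) (hj : j ∈ Tᶜ), i ≠ j ∧
        (G.induce Tᶜ).Reachable ⟨i, hi⟩ ⟨j, hj⟩ ∧
        f = X (Sum.inl i) * X (Sum.inr j) - X (Sum.inl j) * X (Sum.inr i) })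

/-- The number of connected components of the subgraph of `G` induced on `U`. -/
def cNum {n : ℕ} (G : SimpleGraph (Fin n)) (U : Set (Fin n)) : ℕ :=
  Nat.card (G.induce U).ConnectedComponent

/-- `T` has the cutpoint property for `G`: every `i ∈ T` is a cutpoint of the
subgraph of `G` induced on `([n] ∖ T) ∪ {i}`, i.e. removing `i` from that graph
increases the number of connected components. -/
def HasCutpointProperty {n : ℕ} (G : SimpleGraph (Fin n)) (T : Set (Fin n)) : Prop :=
  ∀ i ∈ T, cNum G (Tᶜ ∪ {i}) < cNum G Tᶜ

/-- The `2`-minor `x_i y_j - x_j y_i`. -/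
def edgeBinomial (K : Type*) [Field K] {V : Type*} (i j : V) : MvPolynomial (V ⊕ V) K :=
  X (Sum.inl i) * X (Sum.inr j) - X (Sum.inl j) * X (Sum.inr i)

/-- The weights of the grading of `K[x_i, y_i : i ∈ V]` in which `x_i` and `y_i` both have
degree the `i`-th unit vector. -/
def vertexWeight {V : Type*} [DecidableEq V] : V ⊕ V → V → ℕ :=
  Sum.elim (fun i => Pi.single i 1) (fun i => Pi.single i 1)

theorem weight_vertexWeight_apply {V : Type*} [DecidableEq V] [Fintype V] (s : V ⊕ V →₀ ℕ)
    (k : V) : Finsupp.weight vertexWeight s k = s (Sum.inl k) + s (Sum.inr k) := by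
  simp [Finsupp.weight_apply, Finsupp.sum_fintype, vertexWeight, Finset.sum_apply,
    Pi.single_apply]

theorem isWeightedHomogeneous_edgeBinomial (K : Type*) [Field K] {V : Type*} [DecidableEq V]
    (i j : V) : IsWeightedHomogeneous vertexWeight (edgeBinomial K i j)
      (Pi.single i 1 + Pi.single j 1) := by
  refine IsWeightedHomogeneous.sub ?_ ?_
  · exact (isWeightedHomogeneous_X K vertexWeight (Sum.inl i)).mul
      (isWeightedHomogeneous_X K vertexWeight (Sum.inr j))
  · rw [add_comm]
    exact (isWeightedHomogeneous_X K vertexWeight (Sum.inl j)).mul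
      (isWeightedHomogeneous_X K vertexWeight (Sum.inr i))

theorem edgeBinomial_mem_binomialEdgeIdeal (K : Type*) [Field K] {V : Type*} {G : SimpleGraph V}
    {i j : V} (h : G.Adj i j) : edgeBinomial K i j ∈ binomialEdgeIdeal K G :=
  Ideal.subset_span ⟨i, j, h, rfl⟩

/-- If `i` and `j` are joined by a walk inside `W`, and a monomial involves every vertex
of `W` other than `i` and `j`, then its product with `x_i y_j - x_j y_i` lies in `J_G`. -/
theorem monomial_mul_edgeBinomial_mem (K : Type*) [Field K] {V : Type*} {G : SimpleGraph V}
    {W : Set V} {i j : W} (p : (G.induce W).Walk i j) (c : K) :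
    ∀ m : V ⊕ V →₀ ℕ,
      (∀ k ∈ W, k ≠ i → k ≠ j → m (Sum.inl k) ≠ 0 ∨ m (Sum.inr k) ≠ 0) →
      monomial m c * edgeBinomial K (i : V) j ∈ binomialEdgeIdeal K G := by
  classical
  induction p with
  | nil => intro m _; simp [edgeBinomial]
  | @cons i k j hik q ih =>
    intro m hm
    have hik' : G.Adj (i : V) k := hik
    have hmem := edgeBinomial_mem_binomialEdgeIdeal K hik'
    by_cases hkj : k = j
    · subst hkj
      exact Ideal.mul_mem_left _ _ hmem
    have hkj' : (k : V) ≠ j := fun h => hkj (Subtype.ext h)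
    have exchange : ∀ side : V → V ⊕ V, (side = Sum.inl ∨ side = Sum.inr) → m (side k) ≠ 0 →
        (X (side k) * edgeBinomial K (i : V) j = X (side i) * edgeBinomial K (k : V) j +
          X (side j) * edgeBinomial K (i : V) k) →
        monomial m c * edgeBinomial K (i : V) j ∈ binomialEdgeIdeal K G := by
      intro side hside hk hrel
      obtain ⟨m', rfl⟩ : ∃ m', m = m' + Finsupp.single (side k) 1 :=
        ⟨m - Finsupp.single (side k) 1, (tsub_add_cancel_of_le (by
          simpa [Nat.one_le_iff_ne_zero] using hk)).symm⟩
      have hsplit : monomial (m' + Finsupp.single (side k) 1) c * edgeBinomial K (i : V) j =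
          monomial (m' + Finsupp.single (side i) 1) c * edgeBinomial K (k : V) j +
            monomial m' c * X (side j) * edgeBinomial K (i : V) k := by
        simp only [monomial_add_single, pow_one]
        linear_combination monomial m' c * hrel
      rw [hsplit]
      refine Ideal.add_mem _ (ih _ fun l hl hlk hlj => ?_) (Ideal.mul_mem_left _ _ hmem)
      by_cases hli : l = i
      · rcases hside with rfl | rfl <;> simp [hli]
      · have := hm l hl hli hlj
        rcases hside with rfl | rfl <;>
          simpa [Finsupp.single_apply, Ne.symm hlk, Ne.symm hli] using this
    rcases hm k k.2 hik'.ne' hkj' with h | h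
    · exact exchange Sum.inl (.inl rfl) h (by simp only [edgeBinomial]; ring)
    · exact exchange Sum.inr (.inr rfl) h (by simp only [edgeBinomial]; ring)

theorem binomialEdgeIdeal_le_PTIdeal (K : Type*) [Field K] {n : ℕ} (G : SimpleGraph (Fin n))
    (T : Set (Fin n)) : binomialEdgeIdeal K G ≤ PTIdeal K G T := by
  refine Ideal.span_le.2 ?_
  rintro _ ⟨i, j, hij, rfl⟩
  have hX : ∀ l ∈ T, X (Sum.inl l) ∈ PTIdeal K G T ∧ X (Sum.inr l) ∈ PTIdeal K G T :=
    fun l hl => ⟨Ideal.subset_span (.inl (.inl ⟨l, hl, rfl⟩)),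
      Ideal.subset_span (.inl (.inr ⟨l, hl, rfl⟩))⟩
  by_cases hi : i ∈ T
  · exact Ideal.sub_mem _ (Ideal.mul_mem_right _ _ (hX i hi).1)
      (Ideal.mul_mem_left _ _ (hX i hi).2)
  by_cases hj : j ∈ T
  · exact Ideal.sub_mem _ (Ideal.mul_mem_left _ _ (hX j hj).2)
      (Ideal.mul_mem_right _ _ (hX j hj).1)
  refine Ideal.subset_span (.inr ⟨i, j, hi, hj, hij.ne, SimpleGraph.Adj.reachable ?_, rfl⟩)
  exact hij

/-- In a multidegree `a` with zero set `T`, the ideal `P_T(G)` is contained in `J_G`. -/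
theorem weightedHomogeneousComponent_mem_of_mem_PTIdeal (K : Type*) [Field K] {n : ℕ}
    (G : SimpleGraph (Fin n)) (a : Fin n → ℕ) {f : MvPolynomial (Fin n ⊕ Fin n) K}
    (hf : f ∈ PTIdeal K G {i | a i = 0}) :
    weightedHomogeneousComponent vertexWeight a f ∈ binomialEdgeIdeal K G := by
  have hX : ∀ (i : Fin n) (v : Fin n ⊕ Fin n) (m : Fin n ⊕ Fin n →₀ ℕ) (c : K), a i = 0 →
      vertexWeight v = Pi.single i 1 →
      weightedHomogeneousComponent vertexWeight a (monomial m c * X v) ∈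
        binomialEdgeIdeal K G := by
    intro i v m c hi hv
    rw [((isWeightedHomogeneous_monomial vertexWeight m c rfl).mul
      (isWeightedHomogeneous_X K vertexWeight v)).weightedHomogeneousComponent_ne]
    · exact zero_mem _
    · intro h
      have := congrFun h i
      simp [hv, hi] at this
  suffices h : ∀ q, weightedHomogeneousComponent vertexWeight a (q * f) ∈
      binomialEdgeIdeal K G by simpa using h 1
  refine Submodule.span_induction (p := fun f _ => ∀ q,
    weightedHomogeneousComponent vertexWeight a (q * f) ∈ binomialEdgeIdeal K G)
    ?_ ?_ ?_ ?_ hf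
  · intro g hg q
    induction q using MvPolynomial.induction_on' with
    | add p q hp hq =>
      rw [add_mul, map_add]
      exact Ideal.add_mem _ hp hq
    | monomial m c =>
      rcases hg with (⟨i, hi, rfl⟩ | ⟨i, hi, rfl⟩) | ⟨i, j, hi, hj, -, ⟨p⟩, rfl⟩
      · exact hX i _ m c hi rfl
      · exact hX i _ m c hi rfl
      · have hhom := (isWeightedHomogeneous_monomial vertexWeight m c rfl).mul
          (isWeightedHomogeneous_edgeBinomial K i j)
        change weightedHomogeneousComponent vertexWeight a
          (monomial m c * edgeBinomial K i j) ∈ _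
        by_cases ha : Finsupp.weight vertexWeight m + (Pi.single i 1 + Pi.single j 1) = a
        · rw [← ha, hhom.weightedHomogeneousComponent_same]
          refine monomial_mul_edgeBinomial_mem K p c m fun k hk hki hkj => ?_
          have hk' : a k ≠ 0 := hk
          have hki' : k ≠ i := hki
          have hkj' : k ≠ j := hkj
          rw [← ha] at hk'
          simp only [weight_vertexWeight_apply, Pi.add_apply, Pi.single_apply, hki', hkj',
            if_false] at hk'
          omega
        · rw [hhom.weightedHomogeneousComponent_ne _ (Ne.symm ha)]
          exact zero_mem _
  · simp
  · intro f g _ _ hf hg q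
    rw [mul_add, map_add]
    exact Ideal.add_mem _ (hf q) (hg q)
  · intro r f _ hf q
    rw [smul_eq_mul, ← mul_assoc]
    exact hf _

/-- The binomial edge ideal decomposes as `J_G = ⋂_{T ⊆ [n]} P_T(G)`. -/
theorem binomialEdgeIdeal_eq_iInf_PTIdeal (K : Type*) [Field K] (n : ℕ)
    (G : SimpleGraph (Fin n)) :
    binomialEdgeIdeal K G = ⨅ T : Set (Fin n), PTIdeal K G T := by
  refine le_antisymm (le_iInf fun T => binomialEdgeIdeal_le_PTIdeal K G T) fun f hf => ?_
  rw [← finsum_weightedHomogeneousComponent vertexWeight f]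
  exact finsum_induction (· ∈ binomialEdgeIdeal K G) (zero_mem _) (fun _ _ => Ideal.add_mem _)
    fun a => weightedHomogeneousComponent_mem_of_mem_PTIdeal K G a (Ideal.mem_iInf.1 hf _)

end
end
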